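/- arXiv:2008.07337 — 9 statements merged into one kernel-verified Lean document; each statement's English description precedes it below -/
import Mathlib

section
/- Let n be an odd positive integer, let a be an integer, and set d := gcd(a, n). Then the least positive integer k such that 2^k·a ≡ a (mod n) or 2^k·a ≡ −a (mod n) is equal to the least positive integer k such that 2^k ≡ 1 (mod n/d) or 2^k ≡ −1 (mod n/d). -/
/-!
With `d = gcd(a, n)`, multiplication by `a` identifies congruence modulo `n / d` with congruence
modulo `n`: `x * a ≡ y * a (mod n)` iff `x ≡ y (mod n / d)` (`mul_modEq_mul_iff_modEq_div_gcd`).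
Taking `x = 2 ^ k` and `y = ±1`, the two sets of exponents coincide, so they have the same least
element. The set is nonempty by Euler's theorem, because `2` is a unit modulo the odd number
`n / d`.
-/

theorem mul_modEq_mul_iff_modEq_div_gcd (n : ℕ) (hn : 0 < n) (a x y : ℤ) :
    x * a ≡ y * a [ZMOD (n : ℤ)] ↔ x ≡ y [ZMOD ((n / Int.gcd a n : ℕ) : ℤ)] := by
  constructor
  · intro h
    have h' := Int.ModEq.cancel_right_div_gcd (by exact_mod_cast hn) h
    rwa [Int.gcd_comm, ← Int.natCast_div] at h'
  · intro h
    have hdn : Int.gcd a n ∣ n := by exact_mod_cast Int.gcd_dvd_right a (n : ℤ)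
    obtain ⟨c, hc⟩ := Int.gcd_dvd_left a (n : ℤ)
    rw [Int.modEq_iff_dvd] at h ⊢
    obtain ⟨t, ht⟩ := h
    have hmul : ((n / Int.gcd a n : ℕ) : ℤ) * (Int.gcd a n : ℤ) = n := by
      exact_mod_cast Nat.div_mul_cancel hdn
    refine ⟨t * c, ?_⟩
    calc y * a - x * a = (y - x) * a := by ring
      _ = (((n / Int.gcd a n : ℕ) : ℤ) * t) * ((Int.gcd a n : ℤ) * c) := by rw [ht, ← hc]
      _ = (((n / Int.gcd a n : ℕ) : ℤ) * (Int.gcd a n : ℤ)) * (t * c) := by ring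
      _ = n * (t * c) := by rw [hmul]

/-- Let `n` be an odd positive integer, `a` an integer and `d := gcd(a, n)`.
The least positive integer `k` with `2^k·a ≡ ±a (mod n)` equals the least positive integer
`k` with `2^k ≡ ±1 (mod n/d)` (and both exist). -/
theorem stmt_6 (n : ℕ) (hn : 0 < n) (hodd : Odd n) (a : ℤ) (d : ℕ) (hd : d = Int.gcd a n) :
    ∃ m : ℕ,
      IsLeast {k : ℕ | 0 < k ∧
        (2 ^ k * a ≡ a [ZMOD (n : ℤ)] ∨ 2 ^ k * a ≡ -a [ZMOD (n : ℤ)])} m ∧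
      IsLeast {k : ℕ | 0 < k ∧
        ((2 : ℤ) ^ k ≡ 1 [ZMOD ((n / d : ℕ) : ℤ)] ∨
          (2 : ℤ) ^ k ≡ -1 [ZMOD ((n / d : ℕ) : ℤ)])} m := by
  subst hd
  have hdn : Int.gcd a n ∣ n := by exact_mod_cast Int.gcd_dvd_right a (n : ℤ)
  have hcop : Nat.Coprime 2 (n / Int.gcd a n) :=
    (Nat.coprime_two_left.mpr hodd).coprime_dvd_right (Nat.div_dvd_of_dvd hdn)
  have hpos : 0 < n / Int.gcd a n :=
    Nat.div_pos (Nat.le_of_dvd hn hdn) (Nat.pos_of_dvd_of_pos hdn hn)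
  have hset : {k : ℕ | 0 < k ∧
        (2 ^ k * a ≡ a [ZMOD (n : ℤ)] ∨ 2 ^ k * a ≡ -a [ZMOD (n : ℤ)])} =
      {k : ℕ | 0 < k ∧
        ((2 : ℤ) ^ k ≡ 1 [ZMOD ((n / Int.gcd a n : ℕ) : ℤ)] ∨
          (2 : ℤ) ^ k ≡ -1 [ZMOD ((n / Int.gcd a n : ℕ) : ℤ)])} := by
    ext k
    have h1 := mul_modEq_mul_iff_modEq_div_gcd n hn a (2 ^ k) 1
    have h2 := mul_modEq_mul_iff_modEq_div_gcd n hn a (2 ^ k) (-1)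
    rw [one_mul] at h1
    rw [neg_one_mul] at h2
    simp only [Set.mem_ofPred_eq, h1, h2]
  have hne : {k : ℕ | 0 < k ∧
        ((2 : ℤ) ^ k ≡ 1 [ZMOD ((n / Int.gcd a n : ℕ) : ℤ)] ∨
          (2 : ℤ) ^ k ≡ -1 [ZMOD ((n / Int.gcd a n : ℕ) : ℤ)])}.Nonempty := by
    refine ⟨Nat.totient (n / Int.gcd a n), Nat.totient_pos.mpr hpos, Or.inl ?_⟩
    exact_mod_cast Int.natCast_modEq_iff.mpr (Nat.ModEq.pow_totient hcop)
  rw [hset]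
  exact ⟨_, ⟨Nat.sInf_mem hne, fun _ hk => Nat.sInf_le hk⟩,
    ⟨Nat.sInf_mem hne, fun _ hk => Nat.sInf_le hk⟩⟩
end

section
/- Let n₁, n₂ be odd positive integers and a₁, a₂ integers. For i ∈ {1,2} let mᵢ be the least positive integer k such that 2^k·aᵢ ≡ ±aᵢ (mod nᵢ), and set l := lcm(m₁, m₂). Let m be the least positive integer k such that either (2^k·a₁ ≡ a₁ (mod n₁) and 2^k·a₂ ≡ a₂ (mod n₂)) or (2^k·a₁ ≡ −a₁ (mod n₁) and 2^k·a₂ ≡ −a₂ (mod n₂)). Then m = l if the latter condition holds for k = l, and m = 2l otherwise; in particular such m exists and m ∈ {l, 2l}. -/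
/-!
The set of `k` with `2 ^ k * a ≡ ±a (mod n)` is closed under addition and under cancellation
(`two_pow_add_mul_iff`), because multiplying a congruence `2 ^ j * a ≡ ±a` by `2 ^ k` gives
`2 ^ (j + k) * a ≡ ±(2 ^ k * a)`. Hence it consists of the multiples of its least positive element
(`sign_period_iff_dvd`). Consequently every `k` satisfying `C k` is a multiple of both `m₁` and
`m₂`, hence of `l`. At `k = l` both components return up to a sign, and doubling the exponent
squares the signs away (`two_pow_two_mul_mul`), so `C (2 * l)` always holds; the only positive
multiple of `l` below `2 * l` is `l` itself.
-/

theorem two_pow_add_mul_iff {n : ℕ} {a : ℤ} {j : ℕ}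
    (hj : 2 ^ j * a ≡ a [ZMOD (n : ℤ)] ∨ 2 ^ j * a ≡ -a [ZMOD (n : ℤ)]) (k : ℕ) :
    (2 ^ (j + k) * a ≡ a [ZMOD (n : ℤ)] ∨ 2 ^ (j + k) * a ≡ -a [ZMOD (n : ℤ)]) ↔
      (2 ^ k * a ≡ a [ZMOD (n : ℤ)] ∨ 2 ^ k * a ≡ -a [ZMOD (n : ℤ)]) := by
  have e : (2 : ℤ) ^ (j + k) * a = 2 ^ k * (2 ^ j * a) := by ring
  rw [e]
  rcases hj with hj | hj
  · have h := hj.mul_left (2 ^ k)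
    exact or_congr ⟨h.symm.trans, h.trans⟩ ⟨h.symm.trans, h.trans⟩
  · have h := hj.mul_left (2 ^ k)
    rw [mul_neg] at h
    -- The sign of `2 ^ j * a ≡ -a` interchanges the two alternatives.
    rw [or_comm]
    refine or_congr ⟨fun h' => ?_, fun h' => h.trans h'.neg⟩
      ⟨fun h' => ?_, fun h' => h.trans (by simpa using h'.neg)⟩
    · simpa using (h.symm.trans h').neg
    · simpa using (h.symm.trans h').neg

theorem sign_period_iff_dvd {n : ℕ} {a : ℤ} {m : ℕ}
    (hm : IsLeast {k : ℕ | 0 < k ∧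
      (2 ^ k * a ≡ a [ZMOD (n : ℤ)] ∨ 2 ^ k * a ≡ -a [ZMOD (n : ℤ)])} m) (k : ℕ) :
    (2 ^ k * a ≡ a [ZMOD (n : ℤ)] ∨ 2 ^ k * a ≡ -a [ZMOD (n : ℤ)]) ↔ m ∣ k := by
  obtain ⟨⟨hpos, hP⟩, hmin⟩ := hm
  induction k using Nat.strong_induction_on with
  | _ k ih =>
    rcases Nat.eq_zero_or_pos k with rfl | hk
    · simp
    · by_cases hlt : k < m
      · exact ⟨fun h => absurd (hmin ⟨hk, h⟩) (by omega),
          fun h => absurd (Nat.le_of_dvd hk h) (by omega)⟩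
      · obtain ⟨r, rfl⟩ := Nat.exists_eq_add_of_le (not_lt.mp hlt)
        rw [two_pow_add_mul_iff hP, ih r (by omega), Nat.dvd_add_right (dvd_refl m)]

theorem two_pow_two_mul_mul {n : ℕ} {a : ℤ} {l : ℕ}
    (h : 2 ^ l * a ≡ a [ZMOD (n : ℤ)] ∨ 2 ^ l * a ≡ -a [ZMOD (n : ℤ)]) :
    2 ^ (2 * l) * a ≡ a [ZMOD (n : ℤ)] := by
  have e : (2 : ℤ) ^ (2 * l) * a = 2 ^ l * (2 ^ l * a) := by ring
  rw [e]
  rcases h with h | h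
  · exact (h.mul_left _).trans h
  · have h' := h.mul_left (2 ^ l)
    rw [mul_neg] at h'
    exact h'.trans (by simpa using h.neg)

/-- Let `n₁, n₂` be odd positive integers, `a₁, a₂` integers, `mᵢ` the least
positive `k` with `2^k·aᵢ ≡ ±aᵢ (mod nᵢ)`, and `l := lcm(m₁, m₂)`. Consider the condition
`C k`: `2^k·a₁ ≡ a₁ (mod n₁)` and `2^k·a₂ ≡ a₂ (mod n₂)`, or `2^k·a₁ ≡ −a₁ (mod n₁)` and
`2^k·a₂ ≡ −a₂ (mod n₂)`. Then the least positive `k` satisfying `C k` exists and equals `l`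
if `C l` holds, and `2l` otherwise. -/
theorem stmt_7 (n₁ n₂ : ℕ) (hn₁ : 0 < n₁) (hn₂ : 0 < n₂) (ho₁ : Odd n₁) (ho₂ : Odd n₂)
    (a₁ a₂ : ℤ) (m₁ m₂ l : ℕ)
    (hm₁ : IsLeast {k : ℕ | 0 < k ∧
      (2 ^ k * a₁ ≡ a₁ [ZMOD (n₁ : ℤ)] ∨ 2 ^ k * a₁ ≡ -a₁ [ZMOD (n₁ : ℤ)])} m₁)
    (hm₂ : IsLeast {k : ℕ | 0 < k ∧
      (2 ^ k * a₂ ≡ a₂ [ZMOD (n₂ : ℤ)] ∨ 2 ^ k * a₂ ≡ -a₂ [ZMOD (n₂ : ℤ)])} m₂)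
    (hl : l = Nat.lcm m₁ m₂)
    (C : ℕ → Prop)
    (hC : ∀ k, C k ↔
      ((2 ^ k * a₁ ≡ a₁ [ZMOD (n₁ : ℤ)] ∧ 2 ^ k * a₂ ≡ a₂ [ZMOD (n₂ : ℤ)]) ∨
        (2 ^ k * a₁ ≡ -a₁ [ZMOD (n₁ : ℤ)] ∧ 2 ^ k * a₂ ≡ -a₂ [ZMOD (n₂ : ℤ)]))) :
    (C l → IsLeast {k : ℕ | 0 < k ∧ C k} l) ∧
      (¬ C l → IsLeast {k : ℕ | 0 < k ∧ C k} (2 * l)) := by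
  have hpos : 0 < l := hl ▸ Nat.lcm_pos hm₁.1.1 hm₂.1.1
  have hdvd : ∀ k, C k → l ∣ k := fun k hk => by
    rw [hl]
    rcases (hC k).1 hk with ⟨h₁, h₂⟩ | ⟨h₁, h₂⟩
    · exact Nat.lcm_dvd ((sign_period_iff_dvd hm₁ k).1 (.inl h₁))
        ((sign_period_iff_dvd hm₂ k).1 (.inl h₂))
    · exact Nat.lcm_dvd ((sign_period_iff_dvd hm₁ k).1 (.inr h₁))
        ((sign_period_iff_dvd hm₂ k).1 (.inr h₂))
  refine ⟨fun h => ⟨⟨hpos, h⟩, fun k hk => Nat.le_of_dvd hk.1 (hdvd k hk.2)⟩, fun h => ⟨⟨by omega,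
    (hC _).2 (.inl ⟨two_pow_two_mul_mul ((sign_period_iff_dvd hm₁ l).2 (hl ▸ Nat.dvd_lcm_left _ _)),
      two_pow_two_mul_mul ((sign_period_iff_dvd hm₂ l).2 (hl ▸ Nat.dvd_lcm_right _ _))⟩)⟩, ?_⟩⟩
  rintro k ⟨hk, hCk⟩
  obtain ⟨t, rfl⟩ := hdvd k hCk
  have ht0 : t ≠ 0 := by rintro rfl; simp at hk
  have ht1 : t ≠ 1 := by rintro rfl; exact h (by simpa using hCk)
  rw [mul_comm 2 l]
  exact Nat.mul_le_mul_left l (by omega)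
end

section
/- Let k be an integer with k ≥ 2, let n be a positive integer, and let a, b ∈ F_{2^n} with a ≠ 0. Then there exist c, d in the algebraic closure of F_{2^n} with c ≠ 0 such that: if k is even, then for all x in the algebraic closure, θ_{c,d}^{k/2}(x) = a·x^{2^k} + b; and if k is odd, then for all x in the algebraic closure, θ_{c,d}^{k}(x) = a^{2^k+1}·x^{2^{2k}} + a·b^{2^k} + b. -/
/-!
The map `x ↦ A x^(4^m) + B` with `A ≠ 0`, `m ≥ 1` over an algebraically closed field of
characteristic two has a fixed point `p`, since `A X^(4^m) - X + B` is nonconstant. By additivity of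
Frobenius the map is then `x ↦ A (x - p)^(4^m) + p`. The `m`-th iterate of
`y ↦ c (y - p)^4 + p = c y^4 + (p - c p^4)` is `x ↦ c^e (x - p)^(4^m) + p` with
`e = 1 + 4 + ⋯ + 4^(m-1)`, so it suffices to take `c` an `e`-th root of `A` and `d = p - c p^4`
(`exists_iterate_eq`). For even `k` this is applied with `m = k / 2` to the given map, and for odd
`k` with `m = k` to its second iterate.
-/

theorem iterate_centered {L : Type*} [CommRing L] (c p x : L) (m : ℕ) :
    (fun y => c * (y - p) ^ 4 + p)^[m] x =
      c ^ (∑ i ∈ Finset.range m, 4 ^ i) * (x - p) ^ 4 ^ m + p := by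
  induction m with
  | zero => simp
  | succ m ih =>
    have h : ∑ i ∈ Finset.range (m + 1), 4 ^ i = (∑ i ∈ Finset.range m, 4 ^ i) * 4 + 1 := by
      rw [Finset.sum_range_succ', Finset.sum_mul]
      simp [pow_succ]
    rw [Function.iterate_succ_apply', ih, h]
    simp only [add_sub_cancel_right]
    rw [pow_succ 4 m, pow_mul, pow_succ c, pow_mul c]
    ring

open Polynomial in
theorem exists_fixed_point {L : Type*} [Field L] [IsAlgClosed L] (A B : L) (hA : A ≠ 0)
    (q : ℕ) (hq : 1 < q) : ∃ p : L, A * p ^ q + B = p := by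
  have hd : (C A * X ^ q + (C (-1) * X + C B)).degree = (q : WithBot ℕ) := by
    rw [degree_add_eq_left_of_degree_lt]
    · exact degree_C_mul_X_pow q hA
    · rw [degree_C_mul_X_pow q hA]
      exact degree_linear_le.trans_lt (by exact_mod_cast hq)
  obtain ⟨p, hp⟩ := IsAlgClosed.exists_root (C A * X ^ q + (C (-1) * X + C B))
    (by rw [hd]; exact_mod_cast (by omega : q ≠ 0))
  refine ⟨p, ?_⟩
  simp only [IsRoot.def, eval_add, eval_mul, eval_C, eval_pow, eval_X] at hp
  linear_combination hp

/-- Over an algebraically closed field of characteristic two, every affine map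
`x ↦ A x^(4^m) + B` with `A ≠ 0`, `m ≥ 1` is an `m`-th iterate of some `y ↦ c y^4 + d`. -/
theorem exists_iterate_eq {L : Type*} [Field L] [IsAlgClosed L] [CharP L 2] (A B : L)
    (hA : A ≠ 0) (m : ℕ) (hm : 0 < m) :
    ∃ c d : L, c ≠ 0 ∧ ∀ x : L, (fun y => c * y ^ 4 + d)^[m] x = A * x ^ 4 ^ m + B := by
  have frob : ∀ (j : ℕ) (u v : L), (u - v) ^ 4 ^ j = u ^ 4 ^ j - v ^ 4 ^ j := by
    intro j u v
    rw [show 4 ^ j = 2 ^ (2 * j) by rw [pow_mul]; norm_num]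
    exact sub_pow_char_pow u v (p := 2) _
  obtain ⟨p, hp⟩ := exists_fixed_point A B hA (4 ^ m) (Nat.one_lt_pow hm.ne' (by norm_num))
  have he : 0 < ∑ i ∈ Finset.range m, 4 ^ i :=
    Finset.sum_pos (fun i _ => by positivity) (Finset.nonempty_range_iff.mpr hm.ne')
  obtain ⟨c, hc⟩ := IsAlgClosed.exists_pow_nat_eq A he
  refine ⟨c, p - c * p ^ 4, ?_, fun x => ?_⟩
  · rintro rfl
    exact hA (by rw [← hc, zero_pow he.ne'])
  · have hf : (fun y => c * y ^ 4 + (p - c * p ^ 4)) = fun y => c * (y - p) ^ 4 + p := by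
      funext y
      have := frob 1 y p
      rw [pow_one] at this
      rw [this]
      ring
    rw [hf, iterate_centered, hc, frob]
    linear_combination -hp

/-- Let `k ≥ 2`, let `K` be the field with `2^n` elements and `a b ∈ K` with
`a ≠ 0`. There exist `c, d` in the algebraic closure of `K`, with `c ≠ 0`, such that for the
map `θ_{c,d}(x) = c·x⁴ + d`: if `k` is even then `θ_{c,d}^{k/2}(x) = a·x^{2^k} + b` for all
`x`, and if `k` is odd then `θ_{c,d}^{k}(x) = a^{2^k+1}·x^{2^{2k}} + a·b^{2^k} + b` for all
`x` (the coefficients `a, b` being viewed in the algebraic closure). -/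
theorem stmt_11 {K : Type*} [Field K] [Fintype K] (n : ℕ) (hn : 0 < n)
    (hK : Fintype.card K = 2 ^ n) (k : ℕ) (hk : 2 ≤ k) (a b : K) (ha : a ≠ 0) :
    ∃ c d : AlgebraicClosure K, c ≠ 0 ∧
      (Even k → ∀ x : AlgebraicClosure K,
        (fun y => c * y ^ 4 + d)^[k / 2] x =
          algebraMap K (AlgebraicClosure K) a * x ^ 2 ^ k +
            algebraMap K (AlgebraicClosure K) b) ∧
      (Odd k → ∀ x : AlgebraicClosure K,
        (fun y => c * y ^ 4 + d)^[k] x =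
          algebraMap K (AlgebraicClosure K) a ^ (2 ^ k + 1) * x ^ 2 ^ (2 * k) +
            algebraMap K (AlgebraicClosure K) a *
              algebraMap K (AlgebraicClosure K) b ^ 2 ^ k +
            algebraMap K (AlgebraicClosure K) b) := by
  have : Fact (Nat.Prime 2) := ⟨Nat.prime_two⟩
  have : CharP K 2 := charP_of_card_eq_prime_pow (f := n) (by simpa using hK)
  have : CharP (AlgebraicClosure K) 2 := charP_of_injective_algebraMap
    (algebraMap K (AlgebraicClosure K)).injective 2
  have hA : algebraMap K (AlgebraicClosure K) a ≠ 0 := by simpa using ha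
  rcases Nat.even_or_odd k with he | ho
  · obtain ⟨c, d, hc, h⟩ := exists_iterate_eq (algebraMap K (AlgebraicClosure K) a)
      (algebraMap K (AlgebraicClosure K) b) hA (k / 2) (by omega)
    refine ⟨c, d, hc, fun _ x => ?_, fun ho => absurd he (Nat.not_even_iff_odd.mpr ho)⟩
    have hk2 : 4 ^ (k / 2) = 2 ^ k := by
      rw [show 4 = 2 ^ 2 by norm_num, ← pow_mul, Nat.two_mul_div_two_of_even he]
    rw [h, hk2]
  · obtain ⟨c, d, hc, h⟩ := exists_iterate_eq (algebraMap K (AlgebraicClosure K) a ^ (2 ^ k + 1))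
      (algebraMap K (AlgebraicClosure K) a * algebraMap K (AlgebraicClosure K) b ^ 2 ^ k +
        algebraMap K (AlgebraicClosure K) b) (pow_ne_zero _ hA) k (by omega)
    refine ⟨c, d, hc, fun he => absurd he (Nat.not_even_iff_odd.mpr ho), fun _ x => ?_⟩
    have hk2 : 4 ^ k = 2 ^ (2 * k) := by rw [pow_mul]; norm_num
    rw [h, hk2, add_assoc]
end

section
/- Let n, k be positive integers, q := 2^k, and let a, b ∈ F_{2^n} with a ≠ 0. Then there exist elements c, c₁, c₂, c₃ in the algebraic closure of F_{2^n} such that c = c₂^q, c₁ = c₃^q, c₂·c = a + b·c₂^q (equivalently c₂^{q+1} + b·c₂^q + a = 0), c₃ = a·c₁^q + b·c₃^q (equivalently a·c₃^{q²} + b·c₃^q + c₃ = 0), and moreover c₂ ≠ 0, c₃ ≠ 0 and c₃ + c₁·c₂ ≠ 0. -/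
/-!
With `F x = x ^ q`, a root `c₂` of `x ^ (q + 1) + b x ^ q + a` splits the additive operator
`a F² + b F + 1` in characteristic two as `(1 + β F) ∘ (1 + c₂ F)`, where `β = a / c₂ ^ q`.
So it suffices to pick `d ≠ 0` in the kernel of the left factor, i.e. `d ^ (q - 1) = β⁻¹`, and
then `c₃` with `c₃ + c₂ c₃ ^ q = d`: this `c₃` is killed by `a F² + b F + 1`, while
`c₃ + c₁ c₂ = d ≠ 0`.
-/

open Polynomial in
/-- A polynomial equation with dominant term `u x ^ m`, a further term `v x ^ l` of lower degree
and a constant term is solvable over an algebraically closed field. -/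
lemma exists_trinomial_root {L : Type*} [Field L] [IsAlgClosed L] (u v w : L) (hu : u ≠ 0)
    (m l : ℕ) (hlm : l < m) : ∃ x : L, u * x ^ m + v * x ^ l + w = 0 := by
  have hm : 0 < m := by omega
  have hlow : (C v * X ^ l + C w : L[X]).degree < (m : WithBot ℕ) := by
    refine lt_of_le_of_lt (degree_add_le _ _) (max_lt ?_ ?_)
    · exact lt_of_le_of_lt (degree_C_mul_X_pow_le _ _) (by exact_mod_cast hlm)
    · exact lt_of_le_of_lt degree_C_le (by exact_mod_cast hm)
  have hdeg : (C u * X ^ m + (C v * X ^ l + C w) : L[X]).degree = m := by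
    rw [degree_add_eq_left_of_degree_lt] <;> rw [degree_C_mul_X_pow _ hu]
    exact hlow
  obtain ⟨x, hx⟩ := IsAlgClosed.exists_root (C u * X ^ m + (C v * X ^ l + C w))
    (by rw [hdeg]; exact_mod_cast hm.ne')
  refine ⟨x, ?_⟩
  simpa [IsRoot, add_assoc] using hx


/-- Let `q := 2^k` (`k ≥ 1`), `K` the field with `2^n` elements and `a b ∈ K`
with `a ≠ 0`. In the algebraic closure of `K` there exist `c, c₁, c₂, c₃` with `c = c₂^q`,
`c₁ = c₃^q`, `c₂·c = a + b·c₂^q`, `c₃ = a·c₁^q + b·c₃^q`, and moreover `c₂ ≠ 0`, `c₃ ≠ 0`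
and `c₃ + c₁·c₂ ≠ 0`. -/
theorem stmt_13 {K : Type*} [Field K] [Fintype K] (n : ℕ) (hn : 0 < n)
    (hK : Fintype.card K = 2 ^ n) (k : ℕ) (hk : 0 < k) (q : ℕ) (hq : q = 2 ^ k)
    (a b : K) (ha : a ≠ 0) :
    ∃ c c₁ c₂ c₃ : AlgebraicClosure K,
      c = c₂ ^ q ∧
      c₁ = c₃ ^ q ∧
      c₂ * c = algebraMap K (AlgebraicClosure K) a +
        algebraMap K (AlgebraicClosure K) b * c₂ ^ q ∧
      c₃ = algebraMap K (AlgebraicClosure K) a * c₁ ^ q +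
        algebraMap K (AlgebraicClosure K) b * c₃ ^ q ∧
      c₂ ≠ 0 ∧ c₃ ≠ 0 ∧ c₃ + c₁ * c₂ ≠ 0 := by
  have : CharP K 2 := by
    obtain ⟨p, hp⟩ := CharP.exists K
    obtain ⟨m, hpp, hm⟩ := FiniteField.card K p
    have hdvd : p ∣ 2 ^ n := by
      rw [← hK, hm]
      exact dvd_pow_self p m.pos.ne'
    have h2 : p = 2 := (Nat.prime_dvd_prime_iff_eq hpp Nat.prime_two).1
      (hpp.dvd_of_dvd_pow hdvd)
    exact h2 ▸ hp
  have : CharP (AlgebraicClosure K) 2 :=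
    charP_of_injective_algebraMap (algebraMap K (AlgebraicClosure K)).injective 2
  have hA : algebraMap K (AlgebraicClosure K) a ≠ 0 := by simpa using ha
  generalize algebraMap K (AlgebraicClosure K) a = A at *
  generalize algebraMap K (AlgebraicClosure K) b = B at *
  have hq2 : 2 ≤ q := by
    rw [hq]
    exact Nat.le_self_pow hk.ne' 2
  have h2 : (2 : AlgebraicClosure K) = 0 := CharTwo.two_eq_zero
  obtain ⟨c₂, hc₂⟩ := exists_trinomial_root 1 B A one_ne_zero (q + 1) q (by omega)
  have hc₂0 : c₂ ≠ 0 := by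
    rintro rfl
    have hq0 : q ≠ 0 := by omega
    simp [hq0, hA] at hc₂
  obtain ⟨β, hβ⟩ : ∃ β, β * c₂ ^ q = A := ⟨A / c₂ ^ q, by field_simp⟩
  have hβ0 : β ≠ 0 := by
    rintro rfl
    exact hA (by rw [← hβ, zero_mul])
  have hβB : c₂ + β = B := by
    apply mul_right_cancel₀ (pow_ne_zero q hc₂0)
    linear_combination hc₂ + hβ - B * c₂ ^ q * h2
  obtain ⟨d, hd⟩ := IsAlgClosed.exists_pow_nat_eq β⁻¹ (n := q - 1) (by omega)
  have hd0 : d ≠ 0 := by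
    rintro rfl
    rw [zero_pow (by omega)] at hd
    exact inv_ne_zero hβ0 hd.symm
  have hdβ : d + β * d ^ q = 0 := by
    have hdq : d ^ q = d * β⁻¹ := by
      rw [← hd, ← pow_succ', Nat.sub_add_cancel (by omega)]
    rw [hdq]
    field_simp
    linear_combination d * h2
  obtain ⟨c₃, hc₃⟩ := exists_trinomial_root c₂ 1 d hc₂0 q 1 (by omega)
  have hc₃d : c₃ + c₃ ^ q * c₂ = d := by linear_combination hc₃ - d * h2
  have hfrob : d ^ q = c₃ ^ q + (c₃ ^ q) ^ q * c₂ ^ q := by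
    rw [← hc₃d, ← mul_pow, hq]
    exact add_pow_char_pow _ _ 2 k
  refine ⟨c₂ ^ q, c₃ ^ q, c₂, c₃, rfl, rfl, ?_, ?_, hc₂0, ?_, ?_⟩
  · linear_combination hc₂ - (A + B * c₂ ^ q) * h2
  · rw [hfrob, ← hc₃d] at hdβ
    linear_combination hdβ - (c₃ ^ q) ^ q * hβ - c₃ ^ q * hβB
      - (A * (c₃ ^ q) ^ q + B * c₃ ^ q) * h2
  · rintro rfl
    apply hd0
    rw [← hc₃d, zero_pow (by omega), zero_mul, add_zero]
  · rw [hc₃d]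
    exact hd0
end

section
/- Let n, k be positive integers, q := 2^k, let a, b ∈ F_{2^n} with a ≠ 0, and let F̄ be the algebraic closure of F_{2^n}. Suppose c, c₁, c₂, c₃ ∈ F̄ satisfy c = c₂^q, c₁ = c₃^q, c₂·c = a + b·c₂^q, c₃ = a·c₁^q + b·c₃^q, and c₃ + c₁·c₂ ≠ 0. Define τ : P¹(F̄) → P¹(F̄) by τ(∞) = 1/c₂, τ(x) = ∞ if c₂·x + c₃ = 0, and τ(x) = (x + c₁)/(c₂·x + c₃) otherwise. Then ψ_{a,b,k}(τ(x)) = τ(θ_{c,0,k}(x)) for every x ∈ P¹(F̄); that is, ψ_{a,b,k} is conjugated to θ_{c,0,k} through τ. -/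
/-!
Both `ψ` and `θ` are a Frobenius power `x ↦ x ^ q` followed by a Möbius map, and the Frobenius
power is additive in characteristic two. Writing `D = c₂ x + c₃`, one gets
`D ^ q = c x ^ q + c₁`, and the equations for `c₂ c` and `c₃` say exactly that
`a (x + c₁) ^ q + b D ^ q = c₂ (c x ^ q) + c₃`. Hence `ψ (τ x)` and `τ (c x ^ q)` are both
`D ^ q / (c₂ (c x ^ q) + c₃)`. If `D = 0`, then `c x ^ q = c₁` and both sides are `0`, the
denominator being nonzero because `c₃ + c₁ c₂ ≠ 0`. At `∞` both sides are `1 / c₂`, by the equation for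
`c₂ c`; here `c₂ ≠ 0`, since otherwise that equation would force `a = 0`.
-/

open scoped Classical in
/-- The map `ψ_{a,b,k}` on `P¹(L) = Option L` (`none` playing the role of `∞`):
`ψ(x) = ∞` if `a·x^(2^k) + b = 0`, `ψ(∞) = 0`, and `ψ(x) = (a·x^(2^k) + b)⁻¹` otherwise. -/
noncomputable def psiMap {L : Type*} [Field L] (a b : L) (k : ℕ) : Option L → Option L
  | none => some 0
  | some x => if a * x ^ (2 ^ k) + b = 0 then none else some (a * x ^ (2 ^ k) + b)⁻¹

open scoped Classical in
/-- Let `q := 2^k` (`k ≥ 1`), `K` the field with `2^n` elements, `a b ∈ K` with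
`a ≠ 0`, and `F̄` the algebraic closure of `K`. If `c, c₁, c₂, c₃ ∈ F̄` satisfy `c = c₂^q`,
`c₁ = c₃^q`, `c₂·c = a + b·c₂^q`, `c₃ = a·c₁^q + b·c₃^q` and `c₃ + c₁·c₂ ≠ 0`, and
`τ : P¹(F̄) → P¹(F̄)` is given by `τ(∞) = 1/c₂`, `τ(x) = ∞` if `c₂·x + c₃ = 0` and
`τ(x) = (x + c₁)/(c₂·x + c₃)` otherwise, then `ψ_{a,b,k} ∘ τ = τ ∘ θ_{c,0,k}` on `P¹(F̄)`,
where `θ_{c,0,k}` maps `x ↦ c·x^{2^k}` and `∞ ↦ ∞`. -/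
theorem stmt_14 {K : Type*} [Field K] [Fintype K] (n : ℕ) (hn : 0 < n)
    (hK : Fintype.card K = 2 ^ n) (k : ℕ) (hk : 0 < k) (q : ℕ) (hq : q = 2 ^ k)
    (a b : K) (ha : a ≠ 0) (c c₁ c₂ c₃ : AlgebraicClosure K)
    (h1 : c = c₂ ^ q)
    (h2 : c₁ = c₃ ^ q)
    (h3 : c₂ * c = algebraMap K (AlgebraicClosure K) a +
      algebraMap K (AlgebraicClosure K) b * c₂ ^ q)
    (h4 : c₃ = algebraMap K (AlgebraicClosure K) a * c₁ ^ q +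
      algebraMap K (AlgebraicClosure K) b * c₃ ^ q)
    (h5 : c₃ + c₁ * c₂ ≠ 0)
    (τ : Option (AlgebraicClosure K) → Option (AlgebraicClosure K))
    (hτnone : τ none = some (1 / c₂))
    (hτ : ∀ x : AlgebraicClosure K,
      τ (some x) = if c₂ * x + c₃ = 0 then none else some ((x + c₁) / (c₂ * x + c₃))) :
    ∀ x : Option (AlgebraicClosure K),
      psiMap (algebraMap K (AlgebraicClosure K) a) (algebraMap K (AlgebraicClosure K) b) k
          (τ x) =
        τ (Option.map (fun y => c * y ^ (2 ^ k)) x) := by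
  have hcard : ringChar K = 2 := by
    have hdvd : ringChar K ∣ 2 ^ n := by
      rw [← hK]
      exact ringChar.dvd (FiniteField.cast_card_eq_zero K)
    have hp : (ringChar K).Prime := CharP.char_is_prime K (ringChar K)
    exact (Nat.prime_dvd_prime_iff_eq hp Nat.prime_two).1 (hp.dvd_of_dvd_pow hdvd)
  have : CharP K 2 := ringChar.of_eq hcard
  have : CharP (AlgebraicClosure K) 2 :=
    charP_of_injective_algebraMap (algebraMap K (AlgebraicClosure K)).injective 2
  have ha' : algebraMap K (AlgebraicClosure K) a ≠ 0 := by simpa using ha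
  generalize algebraMap K (AlgebraicClosure K) a = A at *
  generalize algebraMap K (AlgebraicClosure K) b = B at *
  have frob : ∀ u v : AlgebraicClosure K, (u + v) ^ q = u ^ q + v ^ q := by
    intro u v
    rw [hq]
    exact add_pow_char_pow u v 2 k
  have hq0 : q ≠ 0 := by rw [hq]; positivity
  have hc₂ : c₂ ≠ 0 := by
    rintro rfl
    simp only [zero_mul, zero_pow hq0, mul_zero, add_zero] at h3
    exact ha' h3.symm
  rw [← hq]
  have hD : ∀ x, (c₂ * x + c₃) ^ q = c * x ^ q + c₁ := by
    intro x
    rw [frob, mul_pow, h1, h2]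
  rintro (_ | x)
  · have e : A * (1 / c₂) ^ q + B = c₂ := by
      have : c₂ ^ q ≠ 0 := pow_ne_zero _ hc₂
      rw [h1] at h3
      rw [div_pow, one_pow]
      field_simp
      linear_combination -h3
    simp only [hτnone, psiMap, Option.map_none, ← hq, e, if_neg hc₂]
    rw [one_div]
  · simp only [Option.map_some, hτ]
    have hDx := hD x
    by_cases h0 : c₂ * x + c₃ = 0
    · rw [h0, zero_pow hq0] at hDx
      have hx : c * x ^ q = c₁ := by
        rw [← CharTwo.add_eq_zero, ← hDx]
      have hne : c₂ * c₁ + c₃ ≠ 0 := by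
        intro h
        exact h5 (by linear_combination h)
      rw [hx, if_pos h0, if_neg hne, CharTwo.add_self_eq_zero, zero_div]
      rfl
    · have hDq : (c₂ * x + c₃) ^ q ≠ 0 := pow_ne_zero _ h0
      have e : A * ((x + c₁) / (c₂ * x + c₃)) ^ q + B =
          (c₂ * (c * x ^ q) + c₃) / (c₂ * x + c₃) ^ q := by
        rw [div_pow, eq_div_iff hDq, add_mul, mul_assoc, div_mul_cancel₀ _ hDq, frob,
          frob, mul_pow]
        linear_combination -h4 - x ^ q * h3
      rw [if_neg h0, psiMap]
      simp only [← hq, e, div_eq_zero_iff, hDq, or_false, inv_div]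
      rw [hDx]
end

section
/- Let m, k be positive integers, q := 2^k, and let a, b, c, c₁, c₂, c₃ ∈ F_{2^m} with a ≠ 0 satisfy c = c₂^q, c₁ = c₃^q, c₂·c = a + b·c₂^q, c₃ = a·c₁^q + b·c₃^q, and c₃ + c₁·c₂ ≠ 0. Then c₂ ≠ 0, c₃ ≠ 0, the elements c₁/c₃ and 1/c₂ of F_{2^m} are fixed points of the map ψ_{a,b,k} on P¹(F_{2^m}), and c₁/c₃ ≠ 1/c₂. -/
/-- Let `q := 2^k` (`k ≥ 1`), `K` the field with `2^m` elements, and let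
`a, b, c, c₁, c₂, c₃ ∈ K` with `a ≠ 0` satisfy `c = c₂^q`, `c₁ = c₃^q`, `c₂·c = a + b·c₂^q`,
`c₃ = a·c₁^q + b·c₃^q` and `c₃ + c₁·c₂ ≠ 0`. Then `c₂ ≠ 0`, `c₃ ≠ 0`, the elements `c₁/c₃`
and `1/c₂` are fixed points of `ψ_{a,b,k}` on `P¹(K)`, and `c₁/c₃ ≠ 1/c₂`. -/
theorem stmt_15 {K : Type*} [Field K] [Fintype K] (m : ℕ) (hm : 0 < m)
    (hK : Fintype.card K = 2 ^ m) (k : ℕ) (hk : 0 < k) (q : ℕ) (hq : q = 2 ^ k)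
    (a b c c₁ c₂ c₃ : K) (ha : a ≠ 0)
    (h1 : c = c₂ ^ q) (h2 : c₁ = c₃ ^ q)
    (h3 : c₂ * c = a + b * c₂ ^ q) (h4 : c₃ = a * c₁ ^ q + b * c₃ ^ q)
    (h5 : c₃ + c₁ * c₂ ≠ 0) :
    c₂ ≠ 0 ∧ c₃ ≠ 0 ∧
      psiMap a b k (some (c₁ / c₃)) = some (c₁ / c₃) ∧
      psiMap a b k (some (1 / c₂)) = some (1 / c₂) ∧
      c₁ / c₃ ≠ 1 / c₂ := by
  subst hq
  have hc₂ : c₂ ≠ 0 := by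
    rintro rfl
    exact ha (by simpa using h3.symm)
  have hc₃ : c₃ ≠ 0 := by
    rintro rfl
    simp [h2] at h5
  have hc₁ : c₁ ≠ 0 := h2 ▸ pow_ne_zero _ hc₃
  refine ⟨hc₂, hc₃, ?_, ?_, fun h => h5 ?_⟩
  · have e : a * (c₁ / c₃) ^ (2 ^ k) + b = c₃ / c₁ := by
      rw [div_pow, ← h2]
      rw [← h2] at h4
      field_simp
      linear_combination -h4
    simp [psiMap, e, hc₁, hc₃]
  · have e : a * (1 / c₂) ^ (2 ^ k) + b = c₂ := by
      rw [div_pow, one_pow, ← h1]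
      have hc : c ≠ 0 := h1 ▸ pow_ne_zero _ hc₂
      rw [← h1] at h3
      field_simp
      linear_combination -h3
    simp only [psiMap]
    rw [e, if_neg hc₂, one_div]
  · -- Equality gives `c₁ * c₂ = c₃`, so `c₃ + c₁ * c₂ = 2 * c₃`, which vanishes since
    -- `2 ^ m = card K` is zero in `K`.
    have h2' : (2 : K) = 0 := by
      have hcard : ((Fintype.card K : ℕ) : K) = 0 := Nat.cast_card_eq_zero K
      rw [hK, Nat.cast_pow] at hcard
      exact_mod_cast eq_zero_of_pow_eq_zero hcard
    rw [div_eq_div_iff hc₃ hc₂] at h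
    linear_combination h + c₃ * h2'
end

section
/- Let m, k be positive integers, q := 2^k, and let a, b, c, c₁, c₂, c₃ ∈ F_{2^m} with a ≠ 0 satisfy c = c₂^q, c₁ = c₃^q, c₂·c = a + b·c₂^q, c₃ = a·c₁^q + b·c₃^q, and c₃ + c₁·c₂ ≠ 0. Set d := gcd(2^k − 1, 2^m − 1). If (c^{−1})^{(2^m−1)/d} ≠ 1, then the map ψ_{a,b,k} has exactly two fixed points in P¹(F_{2^m}). -/
theorem psiMap_eq_some_iff {L : Type*} [Field L] (a b : L) (k : ℕ) (z : L) :
    psiMap a b k (some z) = some z ↔ z * (a * z ^ 2 ^ k + b) = 1 := by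
  unfold psiMap
  by_cases h : a * z ^ 2 ^ k + b = 0
  · simp [h]
  · simp only [h, if_false, Option.some.injEq]
    rw [eq_comm, mul_eq_one_iff_eq_inv₀ h]

/-- Multiply the difference of the equations `a * x ^ q + b = x⁻¹` and `a * w ^ q + b = w⁻¹` by `x * w`,
use that `q`-th powers are additive, and cancel `x - w`. -/
theorem root_pair {K : Type*} [Field K] [CharP K 2] (k : ℕ) (a b x w : K)
    (hx : x * (a * x ^ 2 ^ k + b) = 1) (hw : w * (a * w ^ 2 ^ k + b) = 1) (hxw : x ≠ w) :
    a * x * w * (x - w) ^ (2 ^ k - 1) = -1 := by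
  have hs : (x - w) ^ 2 ^ k = x ^ 2 ^ k - w ^ 2 ^ k := sub_pow_char_pow (p := 2) x w k
  have h0 : x - w ≠ 0 := sub_ne_zero.mpr hxw
  have hp : (x - w) ^ (2 ^ k - 1) * (x - w) = (x - w) ^ 2 ^ k :=
    pow_sub_one_mul (by positivity) _
  apply mul_right_cancel₀ h0
  rw [mul_assoc, hp, hs]
  linear_combination w * hx - x * hw

/-- If the equation `z * (a * z ^ q + b) = 1` has three distinct roots, the quotient of two of them
is a `(q - 1)`-th power. -/
theorem root_ratio {K : Type*} [Field K] [CharP K 2] (k : ℕ) (a b x y w : K)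
    (hx : x * (a * x ^ 2 ^ k + b) = 1) (hy : y * (a * y ^ 2 ^ k + b) = 1)
    (hw : w * (a * w ^ 2 ^ k + b) = 1) (hxw : x ≠ w) (hyw : y ≠ w) :
    x = y * ((y - w) / (x - w)) ^ (2 ^ k - 1) := by
  have e1 := root_pair k a b x w hx hw hxw
  have e2 := root_pair k a b y w hy hw hyw
  have h0 : (x - w) ^ (2 ^ k - 1) ≠ 0 := pow_ne_zero _ (sub_ne_zero.mpr hxw)
  have haw : a * w ≠ 0 := by
    rintro h
    have : a * x * w * (x - w) ^ (2 ^ k - 1) = 0 := by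
      linear_combination x * (x - w) ^ (2 ^ k - 1) * h
    rw [e1] at this
    exact neg_ne_zero.mpr one_ne_zero this
  rw [div_pow, mul_div_assoc', eq_div_iff h0]
  apply mul_left_cancel₀ haw
  linear_combination e1 - e2

/-- Let `q := 2^k` (`k ≥ 1`), `K` the field with `2^m` elements, and let
`a, b, c, c₁, c₂, c₃ ∈ K` with `a ≠ 0` satisfy `c = c₂^q`, `c₁ = c₃^q`, `c₂·c = a + b·c₂^q`,
`c₃ = a·c₁^q + b·c₃^q` and `c₃ + c₁·c₂ ≠ 0`. Set `d := gcd(2^k − 1, 2^m − 1)`.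
If `(c⁻¹)^{(2^m−1)/d} ≠ 1`, then `ψ_{a,b,k}` has exactly two fixed points in `P¹(K)`. -/
theorem stmt_16 {K : Type*} [Field K] [Fintype K] (m : ℕ) (hm : 0 < m)
    (hK : Fintype.card K = 2 ^ m) (k : ℕ) (hk : 0 < k) (q : ℕ) (hq : q = 2 ^ k)
    (a b c c₁ c₂ c₃ : K) (ha : a ≠ 0)
    (h1 : c = c₂ ^ q) (h2 : c₁ = c₃ ^ q)
    (h3 : c₂ * c = a + b * c₂ ^ q) (h4 : c₃ = a * c₁ ^ q + b * c₃ ^ q)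
    (h5 : c₃ + c₁ * c₂ ≠ 0)
    (d : ℕ) (hd : d = Nat.gcd (2 ^ k - 1) (2 ^ m - 1))
    (hne : (c⁻¹) ^ ((2 ^ m - 1) / d) ≠ 1) :
    {z : Option K | psiMap a b k z = z}.ncard = 2 := by
  have : Fact (Nat.Prime 2) := ⟨Nat.prime_two⟩
  have hchar : CharP K 2 := charP_of_card_eq_prime_pow hK
  have hq0 : q ≠ 0 := by rw [hq]; positivity
  have hc2 : c₂ ≠ 0 := by
    rintro rfl
    rw [zero_pow hq0] at h3
    apply ha
    linear_combination -h3
  have hc3 : c₃ ≠ 0 := by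
    rintro rfl
    rw [zero_pow hq0] at h2
    simp [h2] at h5
  have hx : c₂⁻¹ * (a * c₂⁻¹ ^ 2 ^ k + b) = 1 := by
    rw [← hq, inv_pow]
    have : c₂ ^ q ≠ 0 := pow_ne_zero _ hc2
    rw [h1] at h3
    field_simp
    linear_combination -h3
  have hy : (c₁ / c₃) * (a * (c₁ / c₃) ^ 2 ^ k + b) = 1 := by
    have h : c₁ ≠ 0 := by rw [h2]; exact pow_ne_zero _ hc3
    rw [← hq, div_pow, ← h2]
    rw [← h2] at h4
    field_simp
    linear_combination -h4
  have hxy : c₂⁻¹ ≠ c₁ / c₃ := by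
    intro h
    apply h5
    field_simp at h
    rw [h, mul_comm c₁]
    exact CharTwo.add_self_eq_zero _
  have hset : {z : Option K | psiMap a b k z = z} = {some c₂⁻¹, some (c₁ / c₃)} := by
    ext z
    simp only [Set.mem_ofPred_eq, Set.mem_insert_iff, Set.mem_singleton_iff]
    constructor
    · rcases z with _ | w
      · intro h
        simp [psiMap] at h
      intro hw
      rw [psiMap_eq_some_iff] at hw
      by_contra! hcon
      have hxw : c₂⁻¹ ≠ w := fun h => hcon.1 (by rw [h])
      have hyw : c₁ / c₃ ≠ w := fun h => hcon.2 (by rw [h])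
      have hr := root_ratio k a b _ _ w hx hy hw hxw hyw
      have hy' : c₁ / c₃ = c₃ ^ (2 ^ k - 1) := by
        rw [div_eq_iff hc3, pow_sub_one_mul (by positivity), h2, hq]
      obtain ⟨t, ht⟩ : ∃ t : K, c₂⁻¹ = t ^ (2 ^ k - 1) := by
        refine ⟨c₃ * ((c₁ / c₃ - w) / (c₂⁻¹ - w)), ?_⟩
        rw [mul_pow, ← hy']
        exact hr
      have ht0 : c⁻¹ = (t ^ q) ^ (2 ^ k - 1) := by
        rw [h1, ← inv_pow, ht, ← pow_mul, ← pow_mul, mul_comm]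
      have hu : t ^ q ≠ 0 := by
        intro h
        have hp : (2 ^ k - 1 : ℕ) ≠ 0 := by
          have := Nat.one_lt_two_pow hk.ne'
          omega
        rw [h, zero_pow hp, h1] at ht0
        exact inv_ne_zero (pow_ne_zero _ hc2) ht0
      apply hne
      obtain ⟨e, he⟩ : d ∣ 2 ^ k - 1 := hd ▸ Nat.gcd_dvd_left _ _
      have hdm : d ∣ 2 ^ m - 1 := hd ▸ Nat.gcd_dvd_right _ _
      have hexp : (2 ^ k - 1) * ((2 ^ m - 1) / d) = (2 ^ m - 1) * e := by
        rw [he, mul_right_comm, Nat.mul_div_cancel' hdm]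
      rw [ht0, ← pow_mul, hexp, pow_mul, ← hK, FiniteField.pow_card_sub_one_eq_one _ hu, one_pow]
    · rintro (rfl | rfl)
      · exact (psiMap_eq_some_iff ..).mpr hx
      · exact (psiMap_eq_some_iff ..).mpr hy
  rw [hset, Set.ncard_pair]
  simpa using hxy
end

section
/- Let m, k be positive integers, q := 2^k, and let a, b, c, c₁, c₂, c₃ ∈ F_{2^m} with a ≠ 0 satisfy c = c₂^q, c₁ = c₃^q, c₂·c = a + b·c₂^q, c₃ = a·c₁^q + b·c₃^q, and c₃ + c₁·c₂ ≠ 0. Set d := gcd(2^k − 1, 2^m − 1). If (c^{−1})^{(2^m−1)/d} = 1, then the map ψ_{a,b,k} has exactly d + 2 fixed points in P¹(F_{2^m}). -/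
/-- In a finite cyclic group of order `n`, the `r`-th powers are the elements killed by
`n / gcd r n`: the former subgroup is contained in the latter, and both have order `n / gcd r n`. -/
lemma exists_pow_eq_of_pow_div_gcd {G : Type*} [CommGroup G] [IsCyclic G] [Finite G] (r : ℕ)
    (y : G) (hy : y ^ (Nat.card G / Nat.gcd r (Nat.card G)) = 1) : ∃ w : G, w ^ r = y := by
  have hle : (powMonoidHom r : G →* G).range ≤
      (powMonoidHom (Nat.card G / Nat.gcd r (Nat.card G)) : G →* G).ker := by
    rintro _ ⟨x, rfl⟩
    rw [MonoidHom.mem_ker, powMonoidHom_apply, powMonoidHom_apply, ← pow_mul,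
      ← Nat.mul_div_assoc _ (Nat.gcd_dvd_right _ _), mul_comm r,
      Nat.mul_div_assoc _ (Nat.gcd_dvd_left _ _), pow_mul, pow_card_eq_one', one_pow]
  have hcard : Nat.card (powMonoidHom (Nat.card G / Nat.gcd r (Nat.card G)) : G →* G).ker ≤
      Nat.card (powMonoidHom r : G →* G).range := by
    rw [IsCyclic.card_powMonoidHom_ker, IsCyclic.card_powMonoidHom_range,
      Nat.gcd_eq_right (Nat.div_dvd_of_dvd (Nat.gcd_dvd_right _ _)), Nat.gcd_comm]
  have heq := Subgroup.eq_of_le_of_card_ge hle hcard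
  have hmem : y ∈ (powMonoidHom r : G →* G).range := by
    rw [heq]; exact hy
  exact hmem

lemma ncard_pow_eq_self {K : Type*} [Field K] [Fintype K] (q : ℕ) (hq : 1 < q) :
    {t : K | t ^ q = t}.ncard = Nat.gcd (q - 1) (Fintype.card K - 1) + 1 := by
  have hset : {t : K | t ^ q = t} =
      insert 0 ((fun u : Kˣ => (u : K)) '' ((powMonoidHom (q - 1) : Kˣ →* Kˣ).ker : Set Kˣ)) := by
    ext t
    simp only [Set.mem_ofPred_eq, Set.mem_insert_iff, Set.mem_image, SetLike.mem_coe,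
      MonoidHom.mem_ker, powMonoidHom_apply]
    have hsplit : ∀ t : K, t ^ q = t ^ (q - 1) * t := fun t => by
      rw [← pow_succ, Nat.sub_add_cancel hq.le]
    constructor
    · intro h
      by_cases h0 : t = 0
      · exact Or.inl h0
      · refine Or.inr ⟨Units.mk0 t h0, ?_, rfl⟩
        ext
        push_cast
        rw [hsplit] at h
        simpa [h0] using h
    · rintro (rfl | ⟨u, hu, rfl⟩)
      · exact zero_pow (by omega)
      · rw [hsplit, ← Units.val_pow_eq_pow_val, hu, Units.val_one, one_mul]
  rw [hset, Set.ncard_insert_of_notMem (by simp) (Set.toFinite _),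
    Set.ncard_image_of_injective _ Units.val_injective]
  congr 1
  change Nat.card (powMonoidHom (q - 1) : Kˣ →* Kˣ).ker = _
  rw [IsCyclic.card_powMonoidHom_ker, Nat.card_units, Nat.card_eq_fintype_card, Nat.gcd_comm]

/-- Two independent solutions `u₀`, `u₁` of the linear equation parametrize all the roots of
`x * (a * x ^ q + b) = 1` by the projective line over the fixed field of `t ↦ t ^ q`. -/
lemma ncard_roots {K : Type*} [Field K] [Finite K] [CharP K 2] (k q : ℕ) (hq : q = 2 ^ k)
    (a b u₀ u₁ : K) (h₀ : u₀ = a * (u₀ ^ q) ^ q + b * u₀ ^ q)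
    (h₁ : u₁ = a * (u₁ ^ q) ^ q + b * u₁ ^ q) (hne : u₀ ^ q * u₁ ≠ u₁ ^ q * u₀) (ha : a ≠ 0) :
    {x : K | x * (a * x ^ q + b) = 1}.ncard = {t : K | t ^ q = t}.ncard + 1 := by
  have hadd : ∀ x y : K, (x + y) ^ q = x ^ q + y ^ q := fun x y => by
    rw [hq]; exact add_pow_char_pow ..
  have hneg : ∀ x : K, -x = x := CharTwo.neg_eq
  have hq0 : q ≠ 0 := by rw [hq]; positivity
  have hu₁ : u₁ ≠ 0 := by
    rintro rfl; simp [hq0] at hne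
  have hlin : ∀ u : K, u ≠ 0 → u = a * (u ^ q) ^ q + b * u ^ q →
      u ^ q / u * (a * (u ^ q / u) ^ q + b) = 1 := by
    intro u hu h
    have : u ^ q ≠ 0 := pow_ne_zero _ hu
    rw [div_pow]
    field_simp
    linear_combination -h
  -- The elements `u₀ + t * u₁` with `t ^ q = t` are again nonzero solutions.
  have hpow : ∀ t : K, t ^ q = t → (u₀ + t * u₁) ^ q = u₀ ^ q + t * u₁ ^ q := fun t ht => by
    rw [hadd, mul_pow, ht]
  have hnz : ∀ t : K, t ^ q = t → u₀ + t * u₁ ≠ 0 := by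
    intro t ht h
    have h' := hpow t ht
    rw [h, zero_pow hq0] at h'
    apply hne
    linear_combination -u₁ ^ q * h - u₁ * h'
  have hset : {x : K | x * (a * x ^ q + b) = 1} = insert (u₁ ^ q / u₁)
      ((fun t => (u₀ + t * u₁) ^ q / (u₀ + t * u₁)) '' {t : K | t ^ q = t}) := by
    ext x
    simp only [Set.mem_ofPred_eq, Set.mem_insert_iff, Set.mem_image]
    constructor
    · intro hx
      by_cases hx1 : x = u₁ ^ q / u₁
      · exact Or.inl hx1
      right
      have hx0 : x ≠ 0 := by rintro rfl; simp at hx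
      have hD : u₁ * x - u₁ ^ q ≠ 0 := by
        intro h; apply hx1; field_simp; linear_combination h
      have hsub : ∀ x y : K, (x - y) ^ q = x ^ q - y ^ q := fun x y => by
        rw [hq]; exact sub_pow_char_pow ..
      -- Raising `u * x - u ^ q` to the `q`-th power only rescales it, by a factor independent of `u`.
      have key : ∀ u : K, u = a * (u ^ q) ^ q + b * u ^ q →
          a * x * (u * x - u ^ q) ^ q = -(u * x - u ^ q) := by
        intro u hu
        rw [hsub, mul_pow]
        linear_combination u ^ q * hx + x * hu
      have k0 := key u₀ h₀
      have k1 := key u₁ h₁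
      have hax : a * x ≠ 0 := mul_ne_zero ha hx0
      -- `x` determines `t` by solving `x * (u₀ + t * u₁) = u₀ ^ q + t * u₁ ^ q`.
      have ht : (-(u₀ * x - u₀ ^ q) / (u₁ * x - u₁ ^ q)) ^ q
          = -(u₀ * x - u₀ ^ q) / (u₁ * x - u₁ ^ q) := by
        rw [hneg, div_pow, div_eq_div_iff (pow_ne_zero _ hD) hD]
        apply mul_left_cancel₀ hax
        linear_combination (u₁ * x - u₁ ^ q) * k0 - (u₀ * x - u₀ ^ q) * k1
      refine ⟨_, ht, ?_⟩
      have hn := hnz _ ht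
      rw [div_eq_iff hn, hpow _ ht]
      have hT := div_mul_cancel₀ (-(u₀ * x - u₀ ^ q)) hD
      linear_combination -hT
    · rintro (rfl | ⟨t, ht, rfl⟩)
      · exact hlin _ hu₁ h₁
      · apply hlin _ (hnz t ht)
        rw [hpow t ht, hadd, mul_pow, ht]
        linear_combination h₀ + t * h₁
  rw [hset, Set.ncard_insert_of_notMem _ (Set.toFinite _), Set.InjOn.ncard_image]
  · intro s hs t ht hst
    simp only [Set.mem_ofPred_eq] at hs ht
    simp only at hst
    rw [div_eq_div_iff (hnz s hs) (hnz t ht), hpow s hs, hpow t ht] at hst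
    have h : (s - t) * (u₀ ^ q * u₁ - u₁ ^ q * u₀) = 0 := by linear_combination -hst
    exact sub_eq_zero.1 ((mul_eq_zero.1 h).resolve_right (sub_ne_zero.2 hne))
  · rintro ⟨t, ht, h⟩
    simp only [Set.mem_ofPred_eq] at ht
    simp only at h
    rw [div_eq_div_iff (hnz t ht) hu₁, hpow t ht] at h
    exact hne (by linear_combination h)

/-- STATEMENT 16: Let `q := 2^k` (`k ≥ 1`), `K` the field with `2^m` elements, and let
`a, b, c, c₁, c₂, c₃ ∈ K` with `a ≠ 0` satisfy `c = c₂^q`, `c₁ = c₃^q`, `c₂·c = a + b·c₂^q`,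
`c₃ = a·c₁^q + b·c₃^q` and `c₃ + c₁·c₂ ≠ 0`. Set `d := gcd(2^k − 1, 2^m − 1)`.
If `(c⁻¹)^{(2^m−1)/d} = 1`, then `ψ_{a,b,k}` has exactly `d + 2` fixed points in `P¹(K)`. -/
theorem stmt_17 {K : Type*} [Field K] [Fintype K] (m : ℕ) (hm : 0 < m)
    (hK : Fintype.card K = 2 ^ m) (k : ℕ) (hk : 0 < k) (q : ℕ) (hq : q = 2 ^ k)
    (a b c c₁ c₂ c₃ : K) (ha : a ≠ 0)
    (h1 : c = c₂ ^ q) (h2 : c₁ = c₃ ^ q)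
    (h3 : c₂ * c = a + b * c₂ ^ q) (h4 : c₃ = a * c₁ ^ q + b * c₃ ^ q)
    (h5 : c₃ + c₁ * c₂ ≠ 0)
    (d : ℕ) (hd : d = Nat.gcd (2 ^ k - 1) (2 ^ m - 1))
    (heq : (c⁻¹) ^ ((2 ^ m - 1) / d) = 1) :
    {z : Option K | psiMap a b k z = z}.ncard = d + 2 := by
  have : Fact (Nat.Prime 2) := ⟨Nat.prime_two⟩
  have : CharP K 2 := charP_of_card_eq_prime_pow hK
  have hq1 : 1 < q := by rw [hq]; exact Nat.one_lt_two_pow hk.ne'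
  have hc₂ : c₂ ≠ 0 := by
    rintro rfl
    rw [zero_pow (by omega)] at h3
    apply ha
    linear_combination -h3
  have hc : c ≠ 0 := by rw [h1]; exact pow_ne_zero _ hc₂
  obtain ⟨w, hw⟩ : ∃ w : Kˣ, w ^ (q - 1) = (Units.mk0 c hc)⁻¹ := by
    apply exists_pow_eq_of_pow_div_gcd
    ext
    rw [Nat.card_units, Nat.card_eq_fintype_card, hK, hq, ← hd]
    simpa using heq
  have hwq : (w : K) ^ q * c = w := by
    have h : (w : K) ^ (q - 1) = c⁻¹ := by
      rw [← Units.val_pow_eq_pow_val, hw, Units.val_inv_eq_inv_val, Units.val_mk0]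
    rw [← Nat.sub_add_cancel hq1.le, pow_succ, h]
    field_simp
  have hu : ((w : K) * c₂) ^ q = w := by rw [mul_pow, ← h1, hwq]
  have hroots := ncard_roots k q hq a b (w * c₂) c₃
    (by
      rw [hu]
      rw [← h1] at h3
      linear_combination (w : K) ^ q * h3 - c₂ * hwq + b * hwq)
    (by rw [← h2]; rw [← h2] at h4; exact h4)
    (by
      rw [hu, ← h2]
      intro h
      apply h5
      apply mul_left_cancel₀ w.ne_zero
      have h2' : (2 : K) = 0 := CharTwo.two_eq_zero
      linear_combination h + w * c₁ * c₂ * h2') ha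
  have hset : {z : Option K | psiMap a b k z = z} =
      some '' {x : K | x * (a * x ^ q + b) = 1} := by
    ext z
    cases z with
    | none => simp [psiMap]
    | some x =>
      by_cases h : a * x ^ (2 ^ k) + b = 0
      · simp [psiMap, hq, h]
      · rw [hq]
        simp only [psiMap, h, if_false, Set.mem_ofPred_eq, Option.some.injEq, Set.mem_image,
          exists_eq_right]
        rw [inv_eq_one_div, div_eq_iff h, eq_comm]
  rw [hset, Set.ncard_image_of_injective _ (Option.some_injective K), hroots,
    ncard_pow_eq_self q hq1, hK, hq, ← hd]
end

section
/- Let n and k be positive integers and let a ∈ F_{2^n} with a ≠ 0. Then the number of roots of the polynomial P_a(x) := x^{2^k+1} + x + a in F_{2^n} is 0, 1, 2 or 2^{gcd(k,n)} + 1. -/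
/-!
Write `q = 2 ^ k`. Fix a root `r` of `x ^ (q + 1) + x + a`; it is nonzero because `a` is.
Substituting `x = r + y⁻¹` and clearing denominators turns the equation for the roots other than
`r` into the affine equation `a * y ^ q + r ^ 2 * y + r = 0`, whose left side is additive in `y` up
to the constant `r` (`ncard_roots_eq`). If this equation has two distinct solutions with difference
`w`, then its solution set is a translate of `w • F`, where `F` is the subfield of the `c` with
`c ^ q = c` (`ncard_affine`). This subfield has `2 ^ gcd(k, n)` elements, because the unit group is
cyclic of order `2 ^ n - 1` and `gcd(2 ^ n - 1, 2 ^ k - 1) = 2 ^ gcd(n, k) - 1` (`ncard_fixed`).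
So, as soon as there is a root, there are `1 + 0`, `1 + 1` or `1 + 2 ^ gcd(k, n)` of them.
-/

/-- The fixed points of the `k`-th Frobenius power: `0` together with the units killed by
`2 ^ k - 1`. -/
theorem ncard_fixed {K : Type*} [Field K] [Fintype K] (n : ℕ)
    (hK : Fintype.card K = 2 ^ n) (k : ℕ) :
    {c : K | c ^ (2 ^ k) = c}.ncard = 2 ^ Nat.gcd k n := by
  have hpow : 2 ^ k = (2 ^ k - 1) + 1 := (Nat.sub_add_cancel Nat.one_le_two_pow).symm
  have hset : {c : K | c ^ (2 ^ k) = c} = insert 0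
      ((fun u : Kˣ => (u : K)) '' ((powMonoidHom (2 ^ k - 1) : Kˣ →* Kˣ).ker : Set Kˣ)) := by
    ext c
    simp only [Set.mem_ofPred_eq, Set.mem_insert_iff, Set.mem_image, SetLike.mem_coe,
      MonoidHom.mem_ker, powMonoidHom_apply]
    constructor
    · intro h
      by_cases hc : c = 0
      · exact Or.inl hc
      · refine Or.inr ⟨Units.mk0 c hc, ?_, rfl⟩
        rw [hpow, pow_succ] at h
        ext
        simpa using mul_right_cancel₀ hc (h.trans (one_mul c).symm)
    · rintro (rfl | ⟨u, hu, rfl⟩)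
      · simp
      · rw [hpow, pow_succ, ← Units.val_pow_eq_pow_val, hu]
        simp
  have hcard : Nat.card Kˣ = 2 ^ n - 1 := by
    rw [Nat.card_units, Nat.card_eq_fintype_card, hK]
  rw [hset, Set.ncard_insert_of_notMem (by simp),
    Set.ncard_image_of_injective _ Units.val_injective, ← Nat.card_coe_set_eq]
  change Nat.card (powMonoidHom (2 ^ k - 1) : Kˣ →* Kˣ).ker + 1 = _
  rw [IsCyclic.card_powMonoidHom_ker, hcard, Nat.pow_sub_one_gcd_pow_sub_one, Nat.gcd_comm,
    Nat.sub_add_cancel Nat.one_le_two_pow]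

/-- Two distinct solutions of the affine equation determine its whole solution set: the map
`c ↦ y₁ + c * (y₂ - y₁)` is a bijection onto it from the subfield `c ^ q = c`. -/
theorem ncard_affine {K : Type*} [Field K] [CharP K 2] (k : ℕ) (a b e y₁ y₂ : K) (ha : a ≠ 0)
    (hne : y₁ ≠ y₂) (h₁ : a * y₁ ^ (2 ^ k) + b * y₁ + e = 0)
    (h₂ : a * y₂ ^ (2 ^ k) + b * y₂ + e = 0) :
    {y : K | a * y ^ (2 ^ k) + b * y + e = 0}.ncard = {c : K | c ^ (2 ^ k) = c}.ncard := by
  have hw : y₂ - y₁ ≠ 0 := sub_ne_zero.2 hne.symm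
  have hwq : (y₂ - y₁) ^ (2 ^ k) ≠ 0 := pow_ne_zero _ hw
  have hL : a * (y₂ - y₁) ^ (2 ^ k) + b * (y₂ - y₁) = 0 := by
    rw [sub_pow_char_pow]
    linear_combination h₂ - h₁
  have hset : {y : K | a * y ^ (2 ^ k) + b * y + e = 0} =
      (fun c => y₁ + c * (y₂ - y₁)) '' {c : K | c ^ (2 ^ k) = c} := by
    ext y
    simp only [Set.mem_ofPred_eq, Set.mem_image]
    constructor
    · intro hy
      have hyc : y = y₁ + (y - y₁) / (y₂ - y₁) * (y₂ - y₁) := by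
        rw [div_mul_cancel₀ _ hw]; ring
      refine ⟨(y - y₁) / (y₂ - y₁), ?_, hyc.symm⟩
      generalize (y - y₁) / (y₂ - y₁) = c at hyc
      rw [hyc, add_pow_char_pow, mul_pow] at hy
      apply mul_left_cancel₀ (mul_ne_zero ha hwq)
      linear_combination hy - h₁ - c * hL
    · rintro ⟨c, hc, rfl⟩
      rw [add_pow_char_pow, mul_pow, hc]
      linear_combination h₁ + c * hL
  rw [hset, Set.ncard_image_of_injective]
  intro c d hcd
  exact mul_right_cancel₀ hw (add_left_cancel hcd)

/-- The roots other than `r` are the `r + y⁻¹` with `y` a solution of the affine equation; `y = 0`,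
where the inverse is a junk value, never solves it because `r ≠ 0`. -/
theorem ncard_roots_eq {K : Type*} [Field K] [Finite K] [CharP K 2] (k : ℕ) (a r : K) (ha : a ≠ 0)
    (hr : r ^ (2 ^ k + 1) + r + a = 0) :
    {x : K | x ^ (2 ^ k + 1) + x + a = 0}.ncard =
      {y : K | a * y ^ (2 ^ k) + r ^ 2 * y + r = 0}.ncard + 1 := by
  have hr0 : r ≠ 0 := by
    rintro rfl
    exact ha (by simpa using hr)
  have h2 : (2 : K) = 0 := CharTwo.two_eq_zero
  have key : ∀ y : K, y ≠ 0 → ((r + y⁻¹) ^ (2 ^ k + 1) + (r + y⁻¹) + a = 0 ↔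
      a * y ^ (2 ^ k) + r ^ 2 * y + r = 0) := by
    intro y hy
    have hyq : y ^ (2 ^ k) ≠ 0 := pow_ne_zero _ hy
    -- the factor `r` lets `r * (r ^ q + 1) = -a` eliminate `r ^ q`
    have hid : r * y * y ^ (2 ^ k) * ((r + y⁻¹) ^ (2 ^ k + 1) + (r + y⁻¹) + a) =
        a * y ^ (2 ^ k) + r ^ 2 * y + r := by
      rw [pow_succ] at hr
      rw [pow_succ, add_pow_char_pow, inv_pow]
      field_simp
      linear_combination (r * y * y ^ (2 ^ k) + y ^ (2 ^ k)) * hr - a * y ^ (2 ^ k) * h2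
    rw [← hid, mul_eq_zero, or_iff_right (mul_ne_zero (mul_ne_zero hr0 hy) hyq)]
  have hy0 : ∀ y : K, a * y ^ (2 ^ k) + r ^ 2 * y + r = 0 → y ≠ 0 := by
    rintro y h rfl
    exact hr0 (by simpa using h)
  have hset : {x : K | x ^ (2 ^ k + 1) + x + a = 0} =
      insert r ((fun y => r + y⁻¹) '' {y : K | a * y ^ (2 ^ k) + r ^ 2 * y + r = 0}) := by
    ext x
    simp only [Set.mem_ofPred_eq, Set.mem_insert_iff, Set.mem_image]
    constructor
    · intro hx
      by_cases hxr : x = r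
      · exact Or.inl hxr
      · have hx' : r + ((x - r)⁻¹)⁻¹ = x := by rw [inv_inv]; ring
        refine Or.inr ⟨(x - r)⁻¹, ?_, hx'⟩
        rw [← key _ (inv_ne_zero (sub_ne_zero.2 hxr)), hx', hx]
    · rintro (rfl | ⟨y, hy, rfl⟩)
      · exact hr
      · exact (key y (hy0 y hy)).2 hy
  rw [hset, Set.ncard_insert_of_notMem, Set.ncard_image_of_injective]
  · intro y z hyz
    exact inv_injective (add_left_cancel hyz)
  · rintro ⟨y, hy, hyr⟩
    exact inv_ne_zero (hy0 y hy) (add_eq_left.1 hyr)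

/-- Let `K` be the field with `2^n` elements, `k ≥ 1` and `a ∈ K` with
`a ≠ 0`. The number of roots in `K` (counted without multiplicity) of the polynomial
`P_a(x) = x^{2^k+1} + x + a` is `0`, `1`, `2` or `2^{gcd(k,n)} + 1`. -/
theorem stmt_18 {K : Type*} [Field K] [Fintype K] (n : ℕ) (hn : 0 < n)
    (hK : Fintype.card K = 2 ^ n) (k : ℕ) (hk : 0 < k) (a : K) (ha : a ≠ 0) :
    {x : K | x ^ (2 ^ k + 1) + x + a = 0}.ncard = 0 ∨
      {x : K | x ^ (2 ^ k + 1) + x + a = 0}.ncard = 1 ∨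
      {x : K | x ^ (2 ^ k + 1) + x + a = 0}.ncard = 2 ∨
      {x : K | x ^ (2 ^ k + 1) + x + a = 0}.ncard = 2 ^ Nat.gcd k n + 1 := by
  have hchar : CharP K 2 := charP_of_card_eq_prime_pow hK
  rcases Set.eq_empty_or_nonempty {x : K | x ^ (2 ^ k + 1) + x + a = 0} with h | ⟨r, hr⟩
  · left
    rw [h, Set.ncard_empty]
  · rw [ncard_roots_eq k a r ha hr]
    by_cases hT : {y : K | a * y ^ (2 ^ k) + r ^ 2 * y + r = 0}.ncard ≤ 1
    · omega
    · obtain ⟨y₁, y₂, h₁, h₂, hne⟩ := (Set.one_lt_ncard_iff).1 (not_le.1 hT)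
      rw [ncard_affine k a (r ^ 2) r y₁ y₂ ha hne h₁ h₂, ncard_fixed n hK k]
      simp
end
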